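/- Let α : ℝ → ℝ² be a regular C³ plane curve on an open interval I with signed curvature K(t) ≠ 0, let f : I → ℝ be of class C², and define γ : I → ℝ³ by γ(t) = (α₁(t), α₂(t), f(t)). Then the principal unit normal vector N(t) = B(t) × T(t) of γ (with T = γ'/‖γ'‖ and B = (γ'×γ'')/‖γ'×γ''‖) satisfies N(t) = [ (ṡ² + f'²)·ι(α'') − ½ (d/dt)(ṡ² + f'²)·ι(α') + ( f''·ṡ² − f'·(d/dt)(ṡ²/2) )·e₃ ] / [ √(ṡ² + f'²) · √( ṡ⁶K² + ‖f''·α' − f'·α''‖² ) ], where ṡ(t) = ‖α'(t)‖, ι : ℝ² → ℝ³ is the embedding ι(p₁,p₂) = (p₁,p₂,0), and e₃ = (0,0,1). -/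

import Mathlib

open scoped RealInnerProductSpace

noncomputable section

/-- The Euclidean plane `ℝ²`. -/
abbrev E2 := EuclideanSpace ℝ (Fin 2)
/-- Euclidean 3-space `ℝ³`. -/
abbrev E3 := EuclideanSpace ℝ (Fin 3)

/-- The point `(a, b)` of `ℝ²`. -/
def mk2 (a b : ℝ) : E2 := (WithLp.equiv 2 (Fin 2 → ℝ)).symm ![a, b]
/-- The point `(a, b, c)` of `ℝ³`. -/
def mk3 (a b c : ℝ) : E3 := (WithLp.equiv 2 (Fin 3 → ℝ)).symm ![a, b, c]

/-- The complex structure `J(p₁, p₂) = (-p₂, p₁)`, rotation by `π/2` counterclockwise. -/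
def Jc (v : E2) : E2 := mk2 (-(v 1)) (v 0)
/-- The embedding `ι : ℝ² → ℝ³`, `ι(p₁, p₂) = (p₁, p₂, 0)`. -/
def emb (v : E2) : E3 := mk3 (v 0) (v 1) 0
/-- The unit vector `e₃ = (0, 0, 1)`. -/
def e₃ : E3 := mk3 0 0 1
/-- The cross product in `ℝ³`. -/
def cross3 (u v : E3) : E3 :=
  mk3 (u 1 * v 2 - u 2 * v 1) (u 2 * v 0 - u 0 * v 2) (u 0 * v 1 - u 1 * v 0)

@[simp] lemma mk3_0 (a b c : ℝ) : mk3 a b c 0 = a := rfl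
@[simp] lemma mk3_1 (a b c : ℝ) : mk3 a b c 1 = b := rfl
@[simp] lemma mk3_2 (a b c : ℝ) : mk3 a b c 2 = c := rfl
@[simp] lemma mk2_0 (a b : ℝ) : mk2 a b 0 = a := rfl
@[simp] lemma mk2_1 (a b : ℝ) : mk2 a b 1 = b := rfl

lemma norm_sq_E2 (v : E2) : ‖v‖ ^ 2 = v 0 ^ 2 + v 1 ^ 2 := by
  rw [EuclideanSpace.real_norm_sq_eq, Fin.sum_univ_two]

lemma norm_E3 (v : E3) : ‖v‖ = Real.sqrt (v 0 ^ 2 + v 1 ^ 2 + v 2 ^ 2) := by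
  rw [← Real.sqrt_sq (norm_nonneg v), EuclideanSpace.real_norm_sq_eq, Fin.sum_univ_three]

lemma hasDerivAt_euclidean' {n : ℕ} {α : ℝ → EuclideanSpace ℝ (Fin n)}
    {a : EuclideanSpace ℝ (Fin n)} {t : ℝ} :
    HasDerivAt α a t ↔ ∀ i, HasDerivAt (fun u => α u i) (a i) t := by
  rw [← hasDerivAt_pi (φ := fun u i => α u i) (φ' := fun i => a i)]
  constructor
  · intro h
    exact (PiLp.continuousLinearEquiv 2 ℝ
      (fun _ : Fin n => ℝ)).toContinuousLinearMap.hasFDerivAt.comp_hasDerivAt t h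
  · intro h
    exact (PiLp.continuousLinearEquiv 2 ℝ
      (fun _ : Fin n => ℝ)).symm.toContinuousLinearMap.hasFDerivAt.comp_hasDerivAt t h

lemma hasDerivAt_coord (α : ℝ → E2) (a : E2) (t : ℝ) (h : HasDerivAt α a t) (i : Fin 2) :
    HasDerivAt (fun u => α u i) (a i) t :=
  (hasDerivAt_euclidean'.1 h) i

lemma hasDerivAt_cyl (α : ℝ → E2) (f : ℝ → ℝ) (a : E2) (b t : ℝ) (h : HasDerivAt α a t)
    (hf : HasDerivAt f b t) :
    HasDerivAt (fun u => mk3 (α u 0) (α u 1) (f u)) (mk3 (a 0) (a 1) b) t := by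
  rw [hasDerivAt_euclidean']
  intro i
  fin_cases i
  · exact hasDerivAt_coord α a t h 0
  · exact hasDerivAt_coord α a t h 1
  · exact hf

/-- For a regular `C³` plane curve `α` with nonvanishing signed curvature `K`
and a `C²` function `f`, the principal unit normal `N = B × T` of the cylindrical curve
`γ(t) = (α₁(t), α₂(t), f(t))` satisfies
`N = [(ṡ² + f'²)·ι(α'') − ½(d/dt)(ṡ² + f'²)·ι(α') + (f''ṡ² − f'·(d/dt)(ṡ²/2))·e₃] /
     [√(ṡ² + f'²)·√(ṡ⁶K² + ‖f''α' − f'α''‖²)]` where `ṡ = ‖α'‖`. -/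
theorem cylindrical_curve_principal_normal
    (I : Set ℝ) (hIopen : IsOpen I) (hIconn : I.OrdConnected)
    (α : ℝ → E2) (f : ℝ → ℝ) (γ : ℝ → E3) (K : ℝ → ℝ)
    (hα : ContDiffOn ℝ 3 α I) (hreg : ∀ t ∈ I, deriv α t ≠ 0)
    (hK : ∀ t ∈ I, K t = ⟪deriv (deriv α) t, Jc (deriv α t)⟫ / ‖deriv α t‖ ^ 3)
    (hK0 : ∀ t ∈ I, K t ≠ 0)
    (hf : ContDiffOn ℝ 2 f I)
    (hγ : ∀ t, γ t = mk3 (α t 0) (α t 1) (f t)) :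
    ∀ t ∈ I,
      cross3
          (‖cross3 (deriv γ t) (deriv (deriv γ) t)‖⁻¹ •
            cross3 (deriv γ t) (deriv (deriv γ) t))
          (‖deriv γ t‖⁻¹ • deriv γ t) =
        (Real.sqrt (‖deriv α t‖ ^ 2 + deriv f t ^ 2) *
            Real.sqrt (‖deriv α t‖ ^ 6 * K t ^ 2 +
              ‖deriv (deriv f) t • deriv α t - deriv f t • deriv (deriv α) t‖ ^ 2))⁻¹ •
          ((‖deriv α t‖ ^ 2 + deriv f t ^ 2) • emb (deriv (deriv α) t) -
            (1 / 2 * deriv (fun u => ‖deriv α u‖ ^ 2 + deriv f u ^ 2) t) • emb (deriv α t) +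
            (deriv (deriv f) t * ‖deriv α t‖ ^ 2 -
              deriv f t * deriv (fun u => ‖deriv α u‖ ^ 2 / 2) t) • e₃) := by
  intro t ht
  have hA : ∀ u ∈ I, HasDerivAt α (deriv α u) u := fun u hu =>
    ((hα.differentiableOn (by norm_num)).differentiableAt (hIopen.mem_nhds hu)).hasDerivAt
  have hF : ∀ u ∈ I, HasDerivAt f (deriv f u) u := fun u hu =>
    ((hf.differentiableOn (by norm_num)).differentiableAt (hIopen.mem_nhds hu)).hasDerivAt
  have hA2 : HasDerivAt (deriv α) (deriv (deriv α) t) t :=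
    ((((contDiffOn_succ_iff_deriv_of_isOpen (n := 2) hIopen).1 hα).2.2.differentiableOn
      (by norm_num)).differentiableAt (hIopen.mem_nhds ht)).hasDerivAt
  have hF2 : HasDerivAt (deriv f) (deriv (deriv f) t) t :=
    ((((contDiffOn_succ_iff_deriv_of_isOpen (n := 1) hIopen).1 hf).2.2.differentiableOn
      (by norm_num)).differentiableAt (hIopen.mem_nhds ht)).hasDerivAt
  have hγe : γ = fun u => mk3 (α u 0) (α u 1) (f u) := funext hγ
  have hG : ∀ u ∈ I, deriv γ u = mk3 (deriv α u 0) (deriv α u 1) (deriv f u) := fun u hu => by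
    rw [hγe]
    exact (hasDerivAt_cyl α f _ _ u (hA u hu) (hF u hu)).deriv
  have hG2 : deriv (deriv γ) t
      = mk3 (deriv (deriv α) t 0) (deriv (deriv α) t 1) (deriv (deriv f) t) := by
    have he : deriv γ =ᶠ[nhds t] fun u => mk3 (deriv α u 0) (deriv α u 1) (deriv f u) := by
      filter_upwards [hIopen.mem_nhds ht] with u hu using hG u hu
    rw [he.deriv_eq]
    exact (hasDerivAt_cyl (deriv α) (deriv f) _ _ t hA2 hF2).deriv
  have hS : HasDerivAt (fun u => ‖deriv α u‖ ^ 2)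
      (2 * (deriv α t 0 * deriv (deriv α) t 0 + deriv α t 1 * deriv (deriv α) t 1)) t := by
    simp_rw [norm_sq_E2]
    refine (((hasDerivAt_coord _ _ _ hA2 0).pow 2).add
      ((hasDerivAt_coord _ _ _ hA2 1).pow 2)).congr_deriv ?_
    simp
    ring
  have hD1 : deriv (fun u => ‖deriv α u‖ ^ 2 + deriv f u ^ 2) t
      = 2 * (deriv α t 0 * deriv (deriv α) t 0 + deriv α t 1 * deriv (deriv α) t 1)
        + 2 * deriv f t * deriv (deriv f) t := by
    refine (hS.add (hF2.pow 2)).deriv.trans ?_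
    simp
  have hD2 : deriv (fun u => ‖deriv α u‖ ^ 2 / 2) t
      = deriv α t 0 * deriv (deriv α) t 0 + deriv α t 1 * deriv (deriv α) t 1 := by
    refine (hS.div_const 2).deriv.trans ?_
    ring
  have hKs : ‖deriv α t‖ ^ 6 * K t ^ 2
      = (deriv α t 0 * deriv (deriv α) t 1 - deriv α t 1 * deriv (deriv α) t 0) ^ 2 := by
    have hn : ‖deriv α t‖ ≠ 0 := norm_ne_zero_iff.2 (hreg t ht)
    have hi : ⟪deriv (deriv α) t, Jc (deriv α t)⟫
        = deriv α t 0 * deriv (deriv α) t 1 - deriv α t 1 * deriv (deriv α) t 0 := by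
      simp [PiLp.inner_apply, Fin.sum_univ_two, Jc]
      ring
    rw [hK t ht, hi]
    field_simp
  rw [hD1, hD2, hKs, hG t ht, hG2]
  generalize deriv (deriv α) t = b
  generalize deriv α t = a
  generalize deriv (deriv f) t = q
  generalize deriv f t = p
  have hn1 : ‖mk3 (a 0) (a 1) p‖ = Real.sqrt (‖a‖ ^ 2 + p ^ 2) := by
    rw [norm_E3, norm_sq_E2]; rfl
  have hn2 : ‖cross3 (mk3 (a 0) (a 1) p) (mk3 (b 0) (b 1) q)‖
      = Real.sqrt ((a 0 * b 1 - a 1 * b 0) ^ 2 + ‖q • a - p • b‖ ^ 2) := by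
    rw [norm_E3, norm_sq_E2]
    congr 1
    simp [cross3]
    ring
  rw [hn1, hn2, mul_inv]
  generalize (Real.sqrt ((a 0 * b 1 - a 1 * b 0) ^ 2 + ‖q • a - p • b‖ ^ 2))⁻¹ = x
  generalize (Real.sqrt (‖a‖ ^ 2 + p ^ 2))⁻¹ = y
  rw [norm_sq_E2]
  ext i
  fin_cases i <;> simp [cross3, emb, e₃] <;> ring
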